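/- Let n, k ∈ ℕ and γ, p, q ∈ ℝ satisfy 0 > γ > k − n, q > p > 1, and p < (n+γ)q/(n+γ+(q−1)k); set r = p(q−1)/(q(p−1)). Let B ⊆ ℝ^n be an open ball, μ a Radon measure on B with μ(B) < ∞, and let B̃ be an open ball compactly contained in B. Then γ − kr/(r−1) > −n, the constant C := sup_{y ∈ B} ∫_{B̃} |x−y|^{γ − kr/(r−1)} dx is finite, and with φ_s(x) = ∫_B |x−y|^s dμ(y) one has the estimate ∫_{B̃} φ_{γ−k}(x)^p dx ≤ ‖φ_γ‖_{L^q(B̃)}^{p/r} · (C μ(B))^{(qr−p)/(qr)}. -/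

import Mathlib

/-!
Write `r' = r / (r - 1)` and `s = γ - k r'`. Since `γ - k = γ / r + s / r'`, Hölder's inequality in
`μ` gives the pointwise bound `φ_{γ-k} ≤ φ_γ ^ (1/r) * φ_s ^ (1/r')` (`phiK_le`). Raise it to the
power `p` and apply Hölder on `B̃` with the weights `p/(qr)` and `(qr-p)/(qr)`: by the choice of
`r`, one has `p/r = q * p/(qr)` and `p/r' = (qr-p)/(qr)`, so the two factors are integrals of
`φ_γ ^ q` and of `φ_s` itself. Tonelli's theorem bounds the latter by `C * μ B`
(`lintegral_phiK_le`).

The upper bound on `p` is equivalent to `s > -n`, and `|x| ^ s` is then integrable on balls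
(`lintegral_ball_rpow_lt_top`); as `B̃ ⊆ B ⊆ ball y (2R)` for each `y ∈ B`, translation bounds the
integrals in the definition of `C` uniformly in `y`.
-/

open MeasureTheory ENNReal
open scoped ENNReal NNReal

noncomputable section

/-- `n`-dimensional Euclidean space. -/
abbrev Euc (n : ℕ) : Type := EuclideanSpace ℝ (Fin n)

/-- The Riesz-type potential `φ_s(x) = ∫_B |x-y|^s dμ(y)`, with values in `[0,∞]`. -/
def phiK {n : ℕ} (B : Set (Euc n)) (μ : Measure (Euc n)) (s : ℝ) : Euc n → ℝ≥0∞ :=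
  fun x => ∫⁻ y in B, (ENNReal.ofReal ‖x - y‖) ^ s ∂μ

/-- For negative `s` the integrand is `⊤` at the origin, whereas the real power `‖0‖ ^ s` is `0`;
the origin being a null set, the two integrals agree. -/
lemma lintegral_ball_rpow_lt_top {n : ℕ} (hn : 0 < n) {s R : ℝ} (hs : -(n : ℝ) < s)
    (hR : 0 < R) :
    ∫⁻ x in Metric.ball (0 : Euc n) R, (ENNReal.ofReal ‖x‖) ^ s < ⊤ := by
  have : Nonempty (Fin n) := ⟨⟨0, hn⟩⟩
  have hint : IntegrableOn (fun x : Euc n => ‖x‖ ^ s) (Metric.ball 0 R) := by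
    rw [integrableOn_fun_norm_addHaar volume (f := fun t : ℝ => t ^ s)]
    have h1 : IntegrableOn (fun t : ℝ => t ^ ((n : ℝ) - 1 + s)) (Set.Ioo 0 R) :=
      (intervalIntegral.integrableOn_Ioo_rpow_iff hR).2 (by linarith)
    refine h1.congr_fun (fun t ht => ?_) measurableSet_Ioo
    have ht0 : 0 < t := ht.1
    simp only [finrank_euclideanSpace, Fintype.card_fin, smul_eq_mul]
    rw [Real.rpow_add ht0, ← Real.rpow_natCast, Nat.cast_sub hn, Nat.cast_one]
  refine lt_of_eq_of_lt (lintegral_congr_ae ?_) hint.lintegral_lt_top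
  have h0 : ∀ᵐ x : Euc n ∂volume, x ≠ 0 := by
    simp [ae_iff]
  filter_upwards [ae_restrict_of_ae h0] with x hx
  exact ENNReal.ofReal_rpow_of_pos (norm_pos_iff.2 hx)

lemma measurable_kernel {n : ℕ} (s : ℝ) :
    Measurable (fun z : Euc n × Euc n => (ENNReal.ofReal ‖z.1 - z.2‖) ^ s) :=
  ((measurable_fst.sub measurable_snd).norm.ennreal_ofReal).pow_const s

lemma measurable_phiK {n : ℕ} (B : Set (Euc n)) (μ : Measure (Euc n)) (hμ : μ B < ⊤) (s : ℝ) :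
    Measurable (phiK B μ s) := by
  have : IsFiniteMeasure (μ.restrict B) := ⟨by simpa using hμ⟩
  exact (measurable_kernel s).lintegral_prod_right'

/-- Log-convexity of `s ↦ φ_s` on negative exponents, from Hölder's inequality. Negativity of both
exponents is what makes the factorisation of the kernel valid at `x = y`, where each factor
is `⊤`. -/
lemma phiK_le {n : ℕ} (B : Set (Euc n)) (μ : Measure (Euc n)) {s t a b : ℝ} (hs : s < 0)
    (ht : t < 0) (ha : 0 < a) (hb : 0 < b) (hab : a + b = 1) (x : Euc n) :
    phiK B μ (s * a + t * b) x ≤ phiK B μ s x ^ a * phiK B μ t x ^ b := by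
  have hm : ∀ u : ℝ, Measurable (fun y : Euc n => (ENNReal.ofReal ‖x - y‖) ^ u) := fun u =>
    ((measurable_const.sub measurable_id).norm.ennreal_ofReal).pow_const u
  refine le_trans (le_of_eq (lintegral_congr fun y => ?_))
    (ENNReal.lintegral_mul_norm_pow_le (hm s).aemeasurable (hm t).aemeasurable ha.le hb.le hab)
  rw [← ENNReal.rpow_mul, ← ENNReal.rpow_mul]
  have hsa : s * a < 0 := mul_neg_of_neg_of_pos hs ha
  have htb : t * b < 0 := mul_neg_of_neg_of_pos ht hb
  by_cases h0 : ENNReal.ofReal ‖x - y‖ = 0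
  · rw [h0, ENNReal.zero_rpow_of_neg hsa, ENNReal.zero_rpow_of_neg htb,
      ENNReal.zero_rpow_of_neg (add_neg hsa htb), ENNReal.top_mul_top]
  · exact ENNReal.rpow_add _ _ h0 ENNReal.ofReal_ne_top

lemma lintegral_phiK_le {n : ℕ} (B A : Set (Euc n)) (hB : MeasurableSet B) (μ : Measure (Euc n))
    (hμ : μ B < ⊤) (s : ℝ) :
    ∫⁻ x in A, phiK B μ s x ≤
      (⨆ y ∈ B, ∫⁻ x in A, (ENNReal.ofReal ‖x - y‖) ^ s) * μ B := by
  have : IsFiniteMeasure (μ.restrict B) := ⟨by simpa using hμ⟩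
  unfold phiK
  rw [lintegral_lintegral_swap (measurable_kernel s).aemeasurable, ← setLIntegral_const]
  exact setLIntegral_mono' hB fun y hy =>
    le_iSup₂ (f := fun y (_ : y ∈ B) => ∫⁻ x in A, (ENNReal.ofReal ‖x - y‖) ^ s) y hy

/-- the quantitative estimate from the proof of Lemma 1 (i).
With `r = p(q-1)/(q(p-1))` one has `γ - kr/(r-1) > -n`, the constant
`C = sup_{y ∈ B} ∫_{B̃} |x-y|^{γ-kr/(r-1)} dx` is finite, and
`∫_{B̃} φ_{γ-k}^p ≤ ‖φ_γ‖_{L^q(B̃)}^{p/r} (C μ(B))^{(qr-p)/(qr)}`. -/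
theorem stmt9 {n k : ℕ} (γ p q r : ℝ) (hγ0 : γ < 0) (hγ : (k : ℝ) - n < γ)
    (hp1 : 1 < p) (hpq : p < q)
    (hpbound : p < ((n : ℝ) + γ) * q / ((n : ℝ) + γ + (q - 1) * k))
    (hr : r = p * (q - 1) / (q * (p - 1)))
    (c : Euc n) (R : ℝ) (hR : 0 < R) (B : Set (Euc n)) (hB : B = Metric.ball c R)
    (μ : Measure (Euc n)) (hμ : μ B < ⊤)
    (ct : Euc n) (Rt : ℝ) (hRt : 0 < Rt) (Bt : Set (Euc n))
    (hBt : Bt = Metric.ball ct Rt) (hBtB : closure Bt ⊆ B) :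
    γ - k * r / (r - 1) > -(n : ℝ) ∧
    (⨆ y ∈ B, ∫⁻ x in Bt, (ENNReal.ofReal ‖x - y‖) ^ (γ - k * r / (r - 1))) < ⊤ ∧
    ∫⁻ x in Bt, phiK B μ (γ - k) x ^ p ≤
      ((∫⁻ x in Bt, phiK B μ γ x ^ q) ^ (1 / q)) ^ (p / r) *
        ((⨆ y ∈ B, ∫⁻ x in Bt, (ENNReal.ofReal ‖x - y‖) ^ (γ - k * r / (r - 1))) * μ B)
          ^ ((q * r - p) / (q * r)) := by
  have hk0 : (0 : ℝ) ≤ k := Nat.cast_nonneg k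
  have hnγ : (k : ℝ) < n + γ := by linarith
  have hq1 : 1 < q := hp1.trans hpq
  have hp1' : 0 < p - 1 := by linarith
  have hq1' : 0 < q - 1 := by linarith
  have hqp : 0 < q - p := by linarith
  have hp0 : 0 < p := by linarith
  have hq0 : 0 < q := by linarith
  have hn : 0 < n := by
    have : (0 : ℝ) < n := by linarith
    exact_mod_cast this
  have hr1 : r - 1 = (q - p) / (q * (p - 1)) := by
    rw [hr]; field_simp; ring
  have hr1pos : 0 < r - 1 := by rw [hr1]; positivity
  have hr0 : 0 < r := by linarith
  have hrr : k * r / (r - 1) = k * (p * (q - 1)) / (q - p) := by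
    rw [hr1, hr]; field_simp
  have hs : γ - k * r / (r - 1) > -(n : ℝ) := by
    have hden : 0 < (n : ℝ) + γ + (q - 1) * k := by
      have := mul_nonneg hq1'.le hk0
      linarith
    rw [lt_div_iff₀ hden] at hpbound
    have : k * (p * (q - 1)) / (q - p) < n + γ := by
      rw [div_lt_iff₀ hqp]; nlinarith
    rw [hrr]; linarith
  have hsneg : γ - k * r / (r - 1) < 0 := by
    have : 0 ≤ k * r / (r - 1) := by positivity
    linarith
  have hBm : MeasurableSet B := hB ▸ measurableSet_ball
  refine ⟨hs, ?_, ?_⟩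
  · refine lt_of_le_of_lt (iSup₂_le fun y hy => ?_)
      (lintegral_ball_rpow_lt_top hn hs (by positivity : 0 < 2 * R))
    have hsub : Bt ⊆ (fun x => x - y) ⁻¹' Metric.ball (0 : Euc n) (2 * R) := by
      intro x hx
      have hxB : x ∈ B := hBtB (subset_closure hx)
      rw [hB, Metric.mem_ball] at hxB hy
      have := dist_triangle_right x y c
      simp only [Set.mem_preimage, mem_ball_zero_iff, ← dist_eq_norm]
      linarith
    refine (lintegral_mono_set hsub).trans (le_of_eq ?_)
    exact (measurePreserving_sub_right volume y).setLIntegral_comp_preimage measurableSet_ball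
      (measurable_norm.ennreal_ofReal.pow_const _)
  · set s := γ - k * r / (r - 1) with hsdef
    have hexp : γ - k = γ * (1 / r) + s * ((r - 1) / r) := by
      rw [hsdef]; field_simp; ring
    have hqr : q * r - p = p * (q - p) / (p - 1) := by
      rw [hr]; field_simp; ring
    have hqrpos : 0 < q * r - p := by rw [hqr]; positivity
    have hweight : (r - 1) / r * p = (q * r - p) / (q * r) := by
      rw [hqr, hr1]; field_simp
    calc ∫⁻ x in Bt, phiK B μ (γ - k) x ^ p
        ≤ ∫⁻ x in Bt, (phiK B μ γ x ^ q) ^ (p / (q * r)) *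
            phiK B μ s x ^ ((q * r - p) / (q * r)) := by
          refine lintegral_mono fun x => ?_
          have h := phiK_le B μ hγ0 hsneg (by positivity : 0 < 1 / r)
            (by positivity : 0 < (r - 1) / r) (by field_simp; ring) x
          rw [← hexp] at h
          refine (ENNReal.rpow_le_rpow h hp0.le).trans (le_of_eq ?_)
          rw [ENNReal.mul_rpow_of_nonneg _ _ hp0.le, ← ENNReal.rpow_mul, ← ENNReal.rpow_mul,
            ← ENNReal.rpow_mul, hweight]
          congr 2
          field_simp
      _ ≤ (∫⁻ x in Bt, phiK B μ γ x ^ q) ^ (p / (q * r)) *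
            (∫⁻ x in Bt, phiK B μ s x) ^ ((q * r - p) / (q * r)) :=
          ENNReal.lintegral_mul_norm_pow_le
            ((measurable_phiK B μ hμ γ).pow_const q).aemeasurable
            (measurable_phiK B μ hμ s).aemeasurable (by positivity) (by positivity)
            (by field_simp; ring)
      _ ≤ _ := by
          rw [← ENNReal.rpow_mul]
          have he : 1 / q * (p / r) = p / (q * r) := by field_simp
          rw [he]
          gcongr
          exact lintegral_phiK_le B Bt hBm μ hμ s
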